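/- arXiv:2106.14605 — 2 statements merged into one kernel-verified Lean document; each statement's English description precedes it below -/
import Mathlib

section
/- In Q_4 the following hold. (i) The Σ_4-submodule generated by the class of x_3x_4^3 equals the span of the classes of the 12 monomials x_ix_j^3 with i ≠ j, and its subspace of Σ_4-invariants is one-dimensional, spanned by the class of the sum of all 12 monomials x_ix_j^3 (i ≠ j). (ii) The Σ_4-submodule generated by the class of x_2x_3x_4^2 equals the span of the classes of the 8 monomials obtained by assigning the exponents 1, 1, 2 to three distinct variables among x_1,...,x_4 such that the variable carrying exponent 2 is not the smallest-index variable appearing, and its subspace of Σ_4-invariants is trivial. -/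
/-!
Common setup: the polynomial algebra `P_4 = F_2[x_1,x_2,x_3,x_4]` (variables `X 0, ..., X 3`),
the Steenrod action, hit polynomials, the cohit spaces `Q_n`, and the (induced) actions of
`GL_4(F_2)` and of the symmetric group `Σ_4` on `Q_n`.
-/

open MvPolynomial

noncomputable section

abbrev kk : Type := ZMod 2
abbrev P4 : Type := MvPolynomial (Fin 4) kk

/-- The total Steenrod square: the algebra endomorphism of `P4` with `X i ↦ X i + (X i)^2`.
For `g` homogeneous of degree `d`, `Sq^t g` is the degree-`d+t` homogeneous component
of `sqTotal g`. -/
def sqTotal : P4 →ₐ[kk] P4 := aeval fun i => X i + X i ^ 2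

/-- The homogeneous polynomials of degree `n`, i.e. `(P_4)_n`, as a submodule. -/
def homog (n : ℕ) : Submodule kk P4 := homogeneousSubmodule (Fin 4) kk n

/-- The subspace `H_n` of hit polynomials of degree `n`: it is spanned by the elements
`Sq^{n-d}(g) = (sqTotal g)_n` for `g` homogeneous of degree `d < n`, i.e. by all
`∑_{t>0} Sq^t(f_t)` with `f_t ∈ (P_4)_{n-t}`. -/
def hitSub (n : ℕ) : Submodule kk P4 :=
  Submodule.span kk
    {p | ∃ d, d < n ∧ ∃ g ∈ homog d, p = homogeneousComponent n (sqTotal g)}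

/-- The cohit space `Q_n = (P_4)_n / H_n`. -/
abbrev Qn (n : ℕ) :=
  ↥(homog n) ⧸ ((hitSub n).comap (homog n).subtype)

/-- Projection of a polynomial onto its degree-`n` part, landing in `homog n`. -/
def toHomog (n : ℕ) : P4 →ₗ[kk] homog n :=
  (homogeneousComponent n).codRestrict (homog n) fun f => homogeneousComponent_mem n f

/-- The class in `Q_n` of (the degree-`n` component of) a polynomial.  For `f`
homogeneous of degree `n` this is the class `[f]` of `f`. -/
def Qmk (n : ℕ) : P4 →ₗ[kk] Qn n :=
  ((hitSub n).comap (homog n).subtype).mkQ.comp (toHomog n)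

/-- Substitution action of a matrix `M`: the algebra endomorphism `X i ↦ ∑ j M i j • X j`. -/
def substM (M : Matrix (Fin 4) (Fin 4) kk) : P4 →ₐ[kk] P4 :=
  aeval fun i => ∑ j, M i j • X j

/-- The set of invertible `4 × 4` matrices over `F_2`, i.e. `GL_4(F_2)`. -/
def glSet : Set (Matrix (Fin 4) (Fin 4) kk) := {M | IsUnit M}

/-- The set of permutation matrices, i.e. `Σ_4 ⊆ GL_4(F_2)`. -/
def permSet : Set (Matrix (Fin 4) (Fin 4) kk) :=
  {M | ∃ σ : Equiv.Perm (Fin 4), M = σ.toPEquiv.toMatrix}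

/-- Homogeneous polynomials of degree `n` whose class in `Q_n` is invariant under every
element of `G` (the action on classes being induced by `substM`): for every `M ∈ G`,
`M·f - f` is hit. -/
def invPre (n : ℕ) (G : Set (Matrix (Fin 4) (Fin 4) kk)) : Submodule kk P4 :=
  homog n ⊓ ⨅ M ∈ G, (hitSub n).comap ((substM M).toLinearMap - LinearMap.id)

/-- The subspace `(Q_n)^G` of `G`-invariant classes in `Q_n`. -/
def QInv (n : ℕ) (G : Set (Matrix (Fin 4) (Fin 4) kk)) : Submodule kk (Qn n) :=
  (invPre n G).map (Qmk n)

/-- The `Σ_4`-submodule of `Q_n` generated by the classes of the polynomials in `S`: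
the span of the classes of all the permuted polynomials `σ · f`, `σ ∈ Σ_4`, `f ∈ S`. -/
def permSpan (n : ℕ) (S : Set P4) : Submodule kk (Qn n) :=
  Submodule.span kk
    {c | ∃ σ : Equiv.Perm (Fin 4), ∃ f ∈ S, c = Qmk n (rename (⇑σ) f)}

/-!
The coefficient of a spike, a monomial with all exponents of the form `2 ^ k - 1`, is unchanged by
the total square, because `x ^ m (1 + x) ^ m` has an even coefficient at `2 ^ k - 1` unless
`m = 2 ^ k - 1`. Hence it vanishes on hit polynomials, and so does the coefficient of a spike after
any substitution of variables for variables, since these substitutions commute with the Steenrod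
squares. The functionals separating the classes in (i) and (ii) are all of this kind.

For (i) the coefficients of the spikes `x_i x_j³` are permuted transitively by `Σ_4`, so they all
agree on an invariant class. For (ii) `Sq¹(x_a x_b x_c) = x_a x_b x_c (x_a + x_b + x_c)` rewrites
the monomial whose square falls on the smallest index. Setting `x_l = x_j` and reading off the
coefficient of `x_i x_j³` gives a functional `χ_{i;jl}`; on an invariant class all of these take the
same value `c`, while `χ_{i;jl} + χ_{j;li} + χ_{l;ij}` vanishes on the submodule of (ii). So
`c = 3c = 0`.
-/

theorem sum_smul_eq_of_mem_span_image {R M ι : Type*} [Semiring R] [AddCommMonoid M]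
    [Module R M] [DecidableEq ι] {s : Finset ι} {v : ι → M} {φ : ι → M →ₗ[R] R}
    (hφ : ∀ i ∈ s, ∀ j ∈ s, φ i (v j) = if i = j then 1 else 0) {x : M}
    (hx : x ∈ Submodule.span R (v '' s)) : ∑ i ∈ s, φ i x • v i = x := by
  induction hx using Submodule.span_induction with
  | mem x hx =>
    obtain ⟨j, hj, rfl⟩ := hx
    rw [Finset.sum_congr rfl fun i hi => by rw [hφ i hi j hj]]
    simp [Finset.mem_coe.1 hj]
  | zero => simp
  | add x y _ _ hx hy => simp only [map_add, add_smul, Finset.sum_add_distrib, hx, hy]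
  | smul a x _ hx => simp only [map_smul, smul_eq_mul, mul_smul, ← Finset.smul_sum, hx]

theorem sum_sum_ite_ne_eq_sum_offDiag {ι M : Type*} [Fintype ι] [DecidableEq ι]
    [AddCommMonoid M] (F : ι → ι → M) :
    (∑ i, ∑ j, if i ≠ j then F i j else 0) = ∑ p ∈ Finset.univ.offDiag, F p.1 p.2 := by
  rw [← Finset.sum_product', ← Finset.sum_filter]
  congr 1
  ext
  simp

theorem exists_perm_apply_eq₂ {α : Type*} {i j a b : α} (hij : i ≠ j) (hab : a ≠ b) :
    ∃ σ : Equiv.Perm α, σ i = a ∧ σ j = b := by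
  obtain ⟨σ, hσ⟩ := Equiv.Perm.exists_extending_pair ![i, j] ![a, b]
    (by simpa [Function.Injective, Fin.forall_fin_two, eq_comm] using hij)
    (by simpa [Function.Injective, Fin.forall_fin_two, eq_comm] using hab)
  exact ⟨σ, hσ 0, hσ 1⟩

theorem exists_perm_apply_eq₃ {α : Type*} {i j l a b c : α} (hij : i ≠ j) (hil : i ≠ l)
    (hjl : j ≠ l) (hab : a ≠ b) (hac : a ≠ c) (hbc : b ≠ c) :
    ∃ σ : Equiv.Perm α, σ i = a ∧ σ j = b ∧ σ l = c := by
  obtain ⟨σ, hσ⟩ := Equiv.Perm.exists_extending_pair ![i, j, l] ![a, b, c]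
    (by simp [Function.Injective, Fin.forall_fin_succ, hij, hil, hjl, hij.symm, hil.symm,
      hjl.symm])
    (by simp [Function.Injective, Fin.forall_fin_succ, hab, hac, hbc, hab.symm, hac.symm,
      hbc.symm])
  exact ⟨σ, hσ 0, hσ 1, hσ 2⟩

theorem coeff_prod_aeval_X {σ R : Type*} [Fintype σ] [CommSemiring R]
    (q : σ → Polynomial R) (d : σ →₀ ℕ) :
    coeff d (∏ i, Polynomial.aeval (X i : MvPolynomial σ R) (q i)) =
      ∏ i, (q i).coeff (d i) := by
  classical
  have expand (i : σ) : Polynomial.aeval (X i : MvPolynomial σ R) (q i) =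
      ∑ a ∈ (q i).support, C ((q i).coeff a) * X i ^ a := by
    rw [Polynomial.aeval_def, Polynomial.eval₂_eq_sum, Polynomial.sum_def, algebraMap_eq]
  have coeff_term (p : σ → ℕ) :
      coeff d (∏ i, C ((q i).coeff (p i)) * (X i : MvPolynomial σ R) ^ p i) =
        if ⇑d = p then ∏ i, (q i).coeff (p i) else 0 := by
    have : d = Finsupp.indicator Finset.univ (fun i _ => p i) ↔ ⇑d = p := by
      simp [DFunLike.ext_iff, funext_iff]
    rw [Finset.prod_mul_distrib, ← map_prod, coeff_C_mul, coeff_prod_X_pow]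
    simp only [this, mul_ite, mul_one, mul_zero]
  simp only [expand, Finset.prod_univ_sum, coeff_sum, coeff_term, Finset.sum_ite_eq,
    Fintype.mem_piFinset, Polynomial.mem_support_iff]
  split_ifs with h
  · rfl
  · push Not at h
    obtain ⟨i, hi⟩ := h
    exact (Finset.prod_eq_zero (Finset.mem_univ i) hi).symm

theorem even_choose_two_pow_sub_one_sub {k m : ℕ} (hm : m < 2 ^ k - 1) :
    Even (m.choose (2 ^ k - 1 - m)) := by
  induction k generalizing m with
  | zero => simp at hm
  | succ k ih =>
    have lucas := Choose.choose_modEq_choose_mod_mul_choose_div_nat (p := 2)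
      (n := m) (k := 2 ^ (k + 1) - 1 - m)
    rw [Nat.even_iff, lucas]
    obtain ⟨a, rfl | rfl⟩ := Nat.even_or_odd' m
    · rw [show 2 * a % 2 = 0 by lia, show (2 ^ (k + 1) - 1 - 2 * a) % 2 = 1 by lia]
      simp
    · rw [show (2 ^ (k + 1) - 1 - (2 * a + 1)) / 2 = 2 ^ k - 1 - a by lia,
        show (2 * a + 1) / 2 = a by lia]
      exact Nat.even_iff.1 ((ih (by lia)).mul_left _)

theorem coeff_X_add_X_sq_pow_two_pow_sub_one (m k : ℕ) :
    ((Polynomial.X + Polynomial.X ^ 2 : Polynomial (ZMod 2)) ^ m).coeff (2 ^ k - 1) =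
      if m = 2 ^ k - 1 then 1 else 0 := by
  rw [show (Polynomial.X + Polynomial.X ^ 2 : Polynomial (ZMod 2)) =
    Polynomial.X * (1 + Polynomial.X) by ring, mul_pow, Polynomial.coeff_X_pow_mul',
    Polynomial.coeff_one_add_X_pow]
  rcases lt_trichotomy m (2 ^ k - 1) with hlt | rfl | hgt
  · rw [if_pos hlt.le, if_neg hlt.ne,
      (ZMod.natCast_eq_zero_iff_even).2 (even_choose_two_pow_sub_one_sub hlt)]
  · simp
  · rw [if_neg hgt.not_ge, if_neg hgt.ne']

/-! ### Spikes and hit polynomials -/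

theorem sqTotal_monomial_one (m : Fin 4 →₀ ℕ) :
    sqTotal (monomial m 1) =
      ∏ i, Polynomial.aeval (X i : P4)
        ((Polynomial.X + Polynomial.X ^ 2 : Polynomial kk) ^ m i) := by
  rw [monomial_eq, Finsupp.prod_fintype _ _ fun i => pow_zero _]
  simp [sqTotal]

/-- The exponent vectors of the spikes of the hit problem: the monomials in which every variable
has an exponent of the form `2 ^ k - 1`. Since `k = 0` is allowed, a variable may be absent. -/
def IsSpike {ι : Type*} (d : ι →₀ ℕ) : Prop := ∀ i, ∃ k, d i = 2 ^ k - 1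

theorem IsSpike.mapDomain_equiv {ι κ : Type*} {d : ι →₀ ℕ} (hd : IsSpike d) (e : ι ≃ κ) :
    IsSpike (d.mapDomain e) := by
  intro i
  rw [← e.apply_symm_apply i, Finsupp.mapDomain_apply e.injective]
  exact hd _

theorem IsSpike.coeff_sqTotal {d : Fin 4 →₀ ℕ} (hd : IsSpike d) (f : P4) :
    coeff d (sqTotal f) = coeff d f := by
  suffices (lcoeff kk d).comp sqTotal.toLinearMap = lcoeff kk d from LinearMap.congr_fun this f
  refine linearMap_ext fun m => LinearMap.ext_ring ?_
  change coeff d (sqTotal (monomial m 1)) = coeff d (monomial m 1)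
  choose k hk using hd
  have eq_iff : m = d ↔ ∀ i, m i = 2 ^ k i - 1 := by simp [DFunLike.ext_iff, hk]
  rw [sqTotal_monomial_one, coeff_prod_aeval_X, coeff_monomial]
  simp only [hk, coeff_X_add_X_sq_pow_two_pow_sub_one, Finset.prod_ite_zero,
    Finset.prod_const_one, Finset.mem_univ, true_implies, eq_iff]

theorem IsSpike.coeff_eq_zero_of_mem_hitSub {d : Fin 4 →₀ ℕ} (hd : IsSpike d) {n : ℕ} {p : P4}
    (hp : p ∈ hitSub n) : coeff d p = 0 := by
  suffices hitSub n ≤ LinearMap.ker (lcoeff kk d) from this hp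
  refine Submodule.span_le.2 ?_
  rintro _ ⟨m, hm, g, hg, rfl⟩
  change coeff d (homogeneousComponent n (sqTotal g)) = 0
  rw [coeff_homogeneousComponent]
  split_ifs with hn
  · rw [hd.coeff_sqTotal]
    exact hg.coeff_eq_zero (hn ▸ hm.ne')
  · rfl

theorem rename_sqTotal (τ : Fin 4 → Fin 4) (f : P4) :
    rename τ (sqTotal f) = sqTotal (rename τ f) := by
  suffices (rename τ).comp sqTotal = sqTotal.comp (rename τ) from DFunLike.congr_fun this f
  ext i
  simp [sqTotal]

theorem rename_mem_hitSub (τ : Fin 4 → Fin 4) {n : ℕ} {p : P4} (hp : p ∈ hitSub n) :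
    rename τ p ∈ hitSub n := by
  suffices hitSub n ≤ (hitSub n).comap (rename τ).toLinearMap from this hp
  refine Submodule.span_le.2 ?_
  rintro _ ⟨m, hm, g, hg, rfl⟩
  refine Submodule.subset_span ⟨m, hm, rename τ g, IsHomogeneous.rename_isHomogeneous hg, ?_⟩
  simp only [AlgHom.toLinearMap_apply, rename_homogeneousComponent, rename_sqTotal]

theorem Qmk_eq_zero_iff {n : ℕ} {f : P4} :
    Qmk n f = 0 ↔ homogeneousComponent n f ∈ hitSub n := by
  rw [Qmk, LinearMap.comp_apply, Submodule.mkQ_apply, Submodule.Quotient.mk_eq_zero]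
  rfl

theorem Qmk_eq_zero_of_isHomogeneous_ne {m n : ℕ} {f : P4} (hf : f.IsHomogeneous m)
    (hmn : m ≠ n) : Qmk n f = 0 := by
  rw [Qmk_eq_zero_iff, homogeneousComponent_of_mem hf, if_neg hmn.symm]
  exact Submodule.zero_mem _

theorem Qmk_sqTotal_eq_zero {m n : ℕ} (hmn : m < n) {g : P4} (hg : g.IsHomogeneous m) :
    Qmk n (sqTotal g) = 0 :=
  Qmk_eq_zero_iff.2 (Submodule.subset_span ⟨m, hmn, g, hg, rfl⟩)

theorem IsSpike.coeff_rename_eq_of_Qmk_eq {d : Fin 4 →₀ ℕ} (hd : IsSpike d) {f g : P4}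
    (h : Qmk d.degree f = Qmk d.degree g) (τ : Fin 4 → Fin 4) :
    coeff d (rename τ f) = coeff d (rename τ g) := by
  rw [← sub_eq_zero, ← map_sub, Qmk_eq_zero_iff] at h
  have := hd.coeff_eq_zero_of_mem_hitSub (rename_mem_hitSub τ h)
  rwa [rename_homogeneousComponent, coeff_homogeneousComponent, if_pos rfl, map_sub, coeff_sub,
    sub_eq_zero] at this

/-! ### The action of the symmetric group -/

theorem substM_toMatrix_toPEquiv (σ : Equiv.Perm (Fin 4)) :
    substM σ.toPEquiv.toMatrix = rename σ := by
  ext i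
  simp [substM, PEquiv.toMatrix_apply, ite_smul]

theorem mem_invPre_permSet_iff {n : ℕ} {f : P4} :
    f ∈ invPre n permSet ↔
      f ∈ homog n ∧ ∀ σ : Equiv.Perm (Fin 4), rename σ f - f ∈ hitSub n := by
  simp only [invPre, permSet, Submodule.mem_inf, Submodule.mem_iInf, Submodule.mem_comap,
    Set.mem_ofPred_eq, forall_exists_index, forall_eq_apply_imp_iff, substM_toMatrix_toPEquiv]
  rfl

-- Applying `σ` to `f` does not change the left-hand side and turns `τ'` into `τ' ∘ σ = σ ∘ τ`.
theorem IsSpike.coeff_mapDomain_rename_of_mem_invPre {d : Fin 4 →₀ ℕ} (hd : IsSpike d)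
    {n : ℕ} {f : P4} (hf : f ∈ invPre n permSet) {σ : Equiv.Perm (Fin 4)} {τ τ' : Fin 4 → Fin 4}
    (h : τ' ∘ σ = σ ∘ τ) :
    coeff (d.mapDomain σ) (rename τ' f) = coeff d (rename τ f) := by
  have hit := (hd.mapDomain_equiv σ).coeff_eq_zero_of_mem_hitSub
    (rename_mem_hitSub τ' ((mem_invPre_permSet_iff.1 hf).2 σ))
  rw [map_sub, coeff_sub, sub_eq_zero, rename_rename, h, ← rename_rename,
    coeff_rename_mapDomain _ σ.injective] at hit
  exact hit.symm

theorem permSpan_singleton (n : ℕ) (f : P4) :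
    permSpan n {f} =
      Submodule.span kk (Qmk n '' Set.range fun σ : Equiv.Perm (Fin 4) => rename σ f) := by
  rw [permSpan]
  congr 1
  ext c
  simp [eq_comm]

/-! ### The classes of `x_i x_j³` -/

/-- The exponent vector of `x_i x_j³`, which is a spike when `i ≠ j`. -/
def pairSpike {ι : Type*} (i j : ι) : ι →₀ ℕ := Finsupp.single i 1 + Finsupp.single j 3

theorem degree_pairSpike {ι : Type*} (i j : ι) : (pairSpike i j).degree = 4 := by
  simp [pairSpike]

theorem isSpike_pairSpike {ι : Type*} {i j : ι} (hij : i ≠ j) : IsSpike (pairSpike i j) := by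
  intro a
  rw [pairSpike, Finsupp.add_apply]
  obtain rfl | hi := eq_or_ne a i
  · exact ⟨1, by simp [hij]⟩
  obtain rfl | hj := eq_or_ne a j
  · exact ⟨2, by simp [hi]⟩
  · exact ⟨0, by simp [hi, hj]⟩

theorem mapDomain_pairSpike {ι κ : Type*} (τ : ι → κ) (i j : ι) :
    (pairSpike i j).mapDomain τ = pairSpike (τ i) (τ j) := by
  simp [pairSpike, Finsupp.mapDomain_add]

theorem pairSpike_inj {ι : Type*} {i j a b : ι} :
    pairSpike i j = pairSpike a b ↔ i = a ∧ j = b := by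
  classical
  refine ⟨fun h => ?_, by rintro ⟨rfl, rfl⟩; rfl⟩
  have hi := DFunLike.congr_fun h i
  have hj := DFunLike.congr_fun h j
  simp only [pairSpike, Finsupp.add_apply, Finsupp.single_apply] at hi hj
  grind

theorem coeff_pairSpike_X_mul_X_pow_three {ι R : Type*} [DecidableEq ι] [CommSemiring R]
    {i j a b : ι} :
    coeff (pairSpike i j) (X a * X b ^ 3 : MvPolynomial ι R) =
      if i = a ∧ j = b then 1 else 0 := by
  have : (X a * X b ^ 3 : MvPolynomial ι R) = monomial (pairSpike a b) 1 := by
    simp [X, monomial_pow, monomial_mul, pairSpike]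
  simp [this, coeff_monomial, pairSpike_inj, eq_comm]

theorem coeff_pairSpike_eq_of_Qmk_eq {i j : Fin 4} (hij : i ≠ j) {f g : P4}
    (h : Qmk 4 f = Qmk 4 g) : coeff (pairSpike i j) f = coeff (pairSpike i j) g := by
  simpa using (isSpike_pairSpike hij).coeff_rename_eq_of_Qmk_eq
    (by rwa [degree_pairSpike]) id

theorem coeff_pairSpike_eq_of_mem_invPre {n : ℕ} {f : P4} (hf : f ∈ invPre n permSet)
    {i j a b : Fin 4} (hij : i ≠ j) (hab : a ≠ b) :
    coeff (pairSpike i j) f = coeff (pairSpike a b) f := by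
  obtain ⟨σ, rfl, rfl⟩ := exists_perm_apply_eq₂ hij hab
  simpa [mapDomain_pairSpike] using
    ((isSpike_pairSpike hij).coeff_mapDomain_rename_of_mem_invPre hf (σ := σ) (τ := id)
      (τ' := id) rfl).symm

/-- The twelve monomials `x_i x_j³` of part (i). -/
def pairMonomials : Set P4 := {f | ∃ i j : Fin 4, i ≠ j ∧ f = X i * X j ^ 3}

theorem permSpan_eq_span_pairMonomials :
    permSpan 4 {X 2 * X 3 ^ 3} = Submodule.span kk (Qmk 4 '' pairMonomials) := by
  rw [permSpan_singleton]
  congr 2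
  ext f
  constructor
  · rintro ⟨σ, rfl⟩
    exact ⟨σ 2, σ 3, σ.injective.ne (by decide), by simp⟩
  · rintro ⟨i, j, hij, rfl⟩
    obtain ⟨σ, rfl, rfl⟩ := exists_perm_apply_eq₂ (show (2 : Fin 4) ≠ 3 by decide) hij
    exact ⟨σ, by simp⟩

/-- The sum of the monomials in `pairMonomials`, whose class spans the invariants of part (i). -/
def pairSum : P4 := ∑ p ∈ Finset.univ.offDiag, X p.1 * X p.2 ^ 3

theorem pairSum_mem_invPre : pairSum ∈ invPre 4 permSet := by
  refine mem_invPre_permSet_iff.2 ⟨Submodule.sum_mem _ fun p _ =>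
    (isHomogeneous_X _ _).mul ((isHomogeneous_X _ _).pow 3), fun σ => ?_⟩
  have : rename σ pairSum = pairSum := by
    rw [pairSum, map_sum]
    exact Finset.sum_equiv (σ.prodCongr σ) (by simp) (by simp)
  rw [this, sub_self]
  exact Submodule.zero_mem _

theorem coeff_pairSpike_pairSum {i j : Fin 4} (hij : i ≠ j) :
    coeff (pairSpike i j) pairSum = 1 := by
  rw [pairSum, coeff_sum, Finset.sum_eq_single (i, j)]
  · simp [coeff_pairSpike_X_mul_X_pow_three]
  · intro p _ hne
    rw [coeff_pairSpike_X_mul_X_pow_three]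
    grind
  · simp [hij]

theorem Qmk_pairSum_ne_zero : Qmk 4 pairSum ≠ 0 := by
  intro h
  have hij : (0 : Fin 4) ≠ 1 := by decide
  have := coeff_pairSpike_eq_of_Qmk_eq hij (h.trans (map_zero (Qmk 4)).symm)
  rw [coeff_pairSpike_pairSum hij, coeff_zero] at this
  exact one_ne_zero this

theorem eq_smul_pairSum {g : P4} {c : kk} (hg : g ∈ Submodule.span kk pairMonomials)
    (hc : ∀ i j, i ≠ j → coeff (pairSpike i j) g = c) : g = c • pairSum := by
  have image : pairMonomials =
      (fun p : Fin 4 × Fin 4 => X p.1 * X p.2 ^ 3) ''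
        ((Finset.univ : Finset (Fin 4)).offDiag : Set (Fin 4 × Fin 4)) := by
    ext f
    simp [pairMonomials, eq_comm]
  rw [image] at hg
  rw [← sum_smul_eq_of_mem_span_image (φ := fun p => lcoeff kk (pairSpike p.1 p.2)) ?_ hg, pairSum,
    Finset.smul_sum]
  · refine Finset.sum_congr rfl fun p hp => ?_
    rw [lcoeff_apply, hc p.1 p.2 (by simpa using hp)]
  · intro p _ q _
    rw [lcoeff_apply, coeff_pairSpike_X_mul_X_pow_three]
    simp only [Prod.ext_iff]

theorem permSpan_inf_QInv_eq_span_pairSum :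
    permSpan 4 {X 2 * X 3 ^ 3} ⊓ QInv 4 permSet = Submodule.span kk {Qmk 4 pairSum} := by
  rw [permSpan_eq_span_pairMonomials, ← Submodule.map_span]
  apply le_antisymm
  · rintro _ ⟨⟨g, hg, rfl⟩, f, hf, hfg⟩
    rw [eq_smul_pairSum (c := coeff (pairSpike 2 3) f) hg fun i j hij => ?_, map_smul]
    · exact Submodule.smul_mem _ _ (Submodule.mem_span_singleton_self _)
    · rw [← coeff_pairSpike_eq_of_Qmk_eq hij hfg]
      exact coeff_pairSpike_eq_of_mem_invPre hf hij (by decide)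
  · rw [Submodule.span_singleton_le_iff_mem]
    refine ⟨Submodule.mem_map_of_mem (Submodule.sum_mem _ fun p hp => ?_),
      Submodule.mem_map_of_mem pairSum_mem_invPre⟩
    exact Submodule.subset_span ⟨p.1, p.2, by simpa using hp, rfl⟩

/-! ### The classes of `x_i x_j x_l²` -/

/-- The eight monomials of part (ii). Of the three monomials `x_a x_b x_c²` on given variables, the
one whose square falls on the smallest index is left out, being modulo hits the sum of the other
two. -/
def tripleMonomials : Set P4 :=
  {f | ∃ i j l : Fin 4, i < j ∧ i < l ∧ j ≠ l ∧ f = X i * X j * X l ^ 2}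

theorem Qmk_X_mul_X_mul_X_mul_sum_eq_zero (a b c : Fin 4) :
    Qmk 4 (X a * X b * X c * (X a + X b + X c)) = 0 := by
  have hX (i : Fin 4) : (X i : P4).IsHomogeneous 1 := isHomogeneous_X _ i
  have h3 : (X a * X b * X c : P4).IsHomogeneous 3 := ((hX a).mul (hX b)).mul (hX c)
  have h5 : (X a * X b * X c * (X a * X b + X b * X c + X a * X c) : P4).IsHomogeneous 5 :=
    h3.mul ((((hX a).mul (hX b)).add ((hX b).mul (hX c))).add ((hX a).mul (hX c)))
  have h6 : ((X a * X b * X c) ^ 2 : P4).IsHomogeneous 6 := h3.pow 2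
  have hsq : sqTotal (X a * X b * X c) =
      X a * X b * X c + X a * X b * X c * (X a + X b + X c) +
        X a * X b * X c * (X a * X b + X b * X c + X a * X c) + (X a * X b * X c) ^ 2 := by
    simp only [sqTotal, map_mul, aeval_X]
    ring
  have := Qmk_sqTotal_eq_zero (show 3 < 4 by decide) h3
  rwa [hsq, map_add, map_add, map_add, Qmk_eq_zero_of_isHomogeneous_ne h3 (by decide),
    Qmk_eq_zero_of_isHomogeneous_ne h5 (by decide),
    Qmk_eq_zero_of_isHomogeneous_ne h6 (by decide), zero_add, add_zero, add_zero] at this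

theorem Qmk_X_mul_X_mul_X_sq_mem_span {a b c : Fin 4} (hab : a ≠ b) (hac : a ≠ c) (hbc : b ≠ c) :
    Qmk 4 (X a * X b * X c ^ 2) ∈ Submodule.span kk (Qmk 4 '' tripleMonomials) := by
  have mem (i j l : Fin 4) (hij : i < j) (hil : i < l) (hjl : j ≠ l) :
      Qmk 4 (X i * X j * X l ^ 2) ∈ Submodule.span kk (Qmk 4 '' tripleMonomials) :=
    Submodule.subset_span (Set.mem_image_of_mem _ ⟨i, j, l, hij, hil, hjl, rfl⟩)
  by_cases ha : a < b ∧ a < c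
  · exact mem a b c ha.1 ha.2 hbc
  by_cases hb : b < a ∧ b < c
  · rw [mul_comm (X a)]
    exact mem b a c hb.1 hb.2 hac
  have hca : c < a := by lia
  have hcb : c < b := by lia
  have relation : (X a * X b * X c ^ 2 : P4) = X a * X b * X c * (X a + X b + X c) -
      X c * X b * X a ^ 2 - X c * X a * X b ^ 2 := by ring
  rw [relation, map_sub, map_sub, Qmk_X_mul_X_mul_X_mul_sum_eq_zero]
  exact Submodule.sub_mem _ (Submodule.sub_mem _ (Submodule.zero_mem _)
    (mem c b a hcb hca hab.symm)) (mem c a b hca hcb hab)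

theorem permSpan_eq_span_tripleMonomials :
    permSpan 4 {X 1 * X 2 * X 3 ^ 2} = Submodule.span kk (Qmk 4 '' tripleMonomials) := by
  rw [permSpan_singleton]
  refine le_antisymm (Submodule.span_le.2 ?_) (Submodule.span_mono (Set.image_mono ?_))
  · rintro _ ⟨_, ⟨σ, rfl⟩, rfl⟩
    simpa using Qmk_X_mul_X_mul_X_sq_mem_span (σ.injective.ne (show (1 : Fin 4) ≠ 2 by decide))
      (σ.injective.ne (show (1 : Fin 4) ≠ 3 by decide))
      (σ.injective.ne (show (2 : Fin 4) ≠ 3 by decide))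
  · rintro _ ⟨i, j, l, hij, hil, hjl, rfl⟩
    obtain ⟨σ, rfl, rfl, rfl⟩ := exists_perm_apply_eq₃ (show (1 : Fin 4) ≠ 2 by decide)
      (show (1 : Fin 4) ≠ 3 by decide) (show (2 : Fin 4) ≠ 3 by decide) hij.ne hil.ne hjl
    exact ⟨σ, by simp⟩

theorem coeff_pairSpike_X_mul_X_mul_X_sq {ι R : Type*} [DecidableEq ι] [CommSemiring R]
    {i j a b c : ι} :
    coeff (pairSpike i j) (X a * X b * X c ^ 2 : MvPolynomial ι R) =
      if c = j ∧ (a = i ∧ b = j ∨ a = j ∧ b = i) then 1 else 0 := by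
  have eq_monomial : (X a * X b * X c ^ 2 : MvPolynomial ι R) =
      monomial (Finsupp.single a 1 + Finsupp.single b 1 + Finsupp.single c 2) 1 := by
    simp [X, monomial_pow, monomial_mul]
  rw [eq_monomial, coeff_monomial]
  congr 1
  rw [eq_iff_iff]
  constructor
  · intro h
    have hi := DFunLike.congr_fun h i
    have hj := DFunLike.congr_fun h j
    simp only [pairSpike, Finsupp.add_apply, Finsupp.single_apply] at hi hj
    grind
  · rintro ⟨rfl, ⟨rfl, rfl⟩ | ⟨rfl, rfl⟩⟩
    · simp only [pairSpike, add_assoc, ← Finsupp.single_add]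
    · rw [add_comm (Finsupp.single a 1)]
      simp only [pairSpike, add_assoc, ← Finsupp.single_add]

/-- The coefficient of the spike `x_i x_j³` after the variable `x_l` has been set equal to `x_j`.
Like every coefficient of a spike after a substitution of variables it vanishes on hit polynomials;
these functionals separate the classes of `tripleMonomials`, which contain no spike. -/
def mergeCoeff (i j l : Fin 4) : P4 →ₗ[kk] kk :=
  (lcoeff kk (pairSpike i j)).comp (rename (Function.update id l j)).toLinearMap

theorem mergeCoeff_X_mul_X_mul_X_sq {i j l a b c : Fin 4} (hab : a ≠ b) (hac : a ≠ c)
    (hbc : b ≠ c) :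
    mergeCoeff i j l (X a * X b * X c ^ 2) =
      if a = i ∧ (b = j ∧ c = l ∨ b = l ∧ c = j) ∨ b = i ∧ (a = j ∧ c = l ∨ a = l ∧ c = j)
      then 1 else 0 := by
  simp only [mergeCoeff, LinearMap.comp_apply, AlgHom.toLinearMap_apply, map_mul, map_pow,
    rename_X, lcoeff_apply, coeff_pairSpike_X_mul_X_mul_X_sq, Function.update_apply, id]
  congr 1
  grind

theorem mergeCoeff_eq_of_Qmk_eq {i j l : Fin 4} (hij : i ≠ j) {f g : P4}
    (h : Qmk 4 f = Qmk 4 g) : mergeCoeff i j l f = mergeCoeff i j l g :=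
  (isSpike_pairSpike hij).coeff_rename_eq_of_Qmk_eq (by rwa [degree_pairSpike]) _

theorem mergeCoeff_eq_of_mem_invPre {n : ℕ} {f : P4} (hf : f ∈ invPre n permSet)
    {i j l a b c : Fin 4} (hij : i ≠ j) (hil : i ≠ l) (hjl : j ≠ l)
    (hab : a ≠ b) (hac : a ≠ c) (hbc : b ≠ c) :
    mergeCoeff i j l f = mergeCoeff a b c f := by
  obtain ⟨σ, rfl, rfl, rfl⟩ := exists_perm_apply_eq₃ hij hil hjl hab hac hbc
  have conj : Function.update id (σ l) (σ j) ∘ σ = σ ∘ Function.update id l j := by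
    ext1 x
    by_cases hx : x = l <;> simp [hx]
  have := (isSpike_pairSpike hij).coeff_mapDomain_rename_of_mem_invPre hf conj
  rw [mapDomain_pairSpike] at this
  exact this.symm

theorem mergeCoeff_add_cyclic_eq_zero (i j l : Fin 4) {g : P4}
    (hg : g ∈ Submodule.span kk tripleMonomials) :
    mergeCoeff i j l g + mergeCoeff j l i g + mergeCoeff l i j g = 0 := by
  suffices Submodule.span kk tripleMonomials ≤
      LinearMap.ker (mergeCoeff i j l + mergeCoeff j l i + mergeCoeff l i j) from this hg
  refine Submodule.span_le.2 ?_
  rintro _ ⟨a, b, c, hab, hac, hbc, rfl⟩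
  change mergeCoeff i j l (X a * X b * X c ^ 2) + mergeCoeff j l i (X a * X b * X c ^ 2) +
    mergeCoeff l i j (X a * X b * X c ^ 2) = 0
  simp only [mergeCoeff_X_mul_X_mul_X_sq hab.ne hac.ne hbc]
  -- If `{a, b, c} = {i, j, l}`, exactly two of the three terms are `1`, those whose first index is
  -- not `c`; otherwise all are `0`.
  grind

theorem mergeCoeff_eq_zero_of_Qmk_eq {f g : P4} (hf : f ∈ invPre 4 permSet)
    (hg : g ∈ Submodule.span kk tripleMonomials) (hfg : Qmk 4 f = Qmk 4 g)
    {i j l : Fin 4} (hij : i ≠ j) (hil : i ≠ l) (hjl : j ≠ l) :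
    mergeCoeff i j l g = 0 := by
  have cyclic := mergeCoeff_add_cyclic_eq_zero i j l hg
  rw [← mergeCoeff_eq_of_Qmk_eq hij hfg, ← mergeCoeff_eq_of_Qmk_eq hjl hfg,
    ← mergeCoeff_eq_of_Qmk_eq hil.symm hfg,
    mergeCoeff_eq_of_mem_invPre hf hjl hij.symm hil.symm hij hil hjl,
    mergeCoeff_eq_of_mem_invPre hf hil.symm hjl.symm hij hij hil hjl,
    CharTwo.add_self_eq_zero, zero_add] at cyclic
  rw [← mergeCoeff_eq_of_Qmk_eq hij hfg, cyclic]

theorem eq_zero_of_mergeCoeff_eq_zero {g : P4} (hg : g ∈ Submodule.span kk tripleMonomials)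
    (h : ∀ i j l, i ≠ j → i ≠ l → j ≠ l → mergeCoeff i j l g = 0) : g = 0 := by
  let s : Finset (Fin 4 × Fin 4 × Fin 4) := {t | t.1 < t.2.1 ∧ t.1 < t.2.2 ∧ t.2.1 ≠ t.2.2}
  have image : tripleMonomials =
      (fun t : Fin 4 × Fin 4 × Fin 4 => X t.1 * X t.2.1 * X t.2.2 ^ 2) '' s := by
    ext f
    simp [tripleMonomials, s, eq_comm, and_assoc]
  rw [image] at hg
  rw [← sum_smul_eq_of_mem_span_image (φ := fun t => mergeCoeff t.2.1 t.1 t.2.2) ?_ hg]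
  · refine Finset.sum_eq_zero fun t ht => ?_
    obtain ⟨hij, hil, hjl⟩ := (Finset.mem_filter.1 ht).2
    rw [h _ _ _ hij.ne' hjl hil.ne, zero_smul]
  · intro t ht u hu
    obtain ⟨hij, hil, _⟩ := (Finset.mem_filter.1 ht).2
    obtain ⟨hab, hac, hbc⟩ := (Finset.mem_filter.1 hu).2
    rw [mergeCoeff_X_mul_X_mul_X_sq hab.ne hac.ne hbc]
    congr 1
    grind

theorem permSpan_inf_QInv_eq_bot :
    permSpan 4 {X 1 * X 2 * X 3 ^ 2} ⊓ QInv 4 permSet = ⊥ := by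
  rw [permSpan_eq_span_tripleMonomials, ← Submodule.map_span, eq_bot_iff]
  rintro _ ⟨⟨g, hg, rfl⟩, f, hf, hfg⟩
  have : g = 0 := eq_zero_of_mergeCoeff_eq_zero hg fun i j l hij hil hjl =>
    mergeCoeff_eq_zero_of_Qmk_eq hf hg hfg hij hil hjl
  simp [this]

/-- In `Q_4`:
(i) the `Σ_4`-submodule generated by `[x₃x₄³]` is the span of the classes of the 12 monomials
`x_i x_j³` (`i ≠ j`), and its `Σ_4`-invariants are one-dimensional, spanned by the class of
the sum of all 12 monomials `x_i x_j³`;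
(ii) the `Σ_4`-submodule generated by `[x₂x₃x₄²]` is the span of the classes of the 8
monomials with exponents `1, 1, 2` on three distinct variables in which the variable carrying
`2` is not the smallest-index variable appearing, and its `Σ_4`-invariants are trivial. -/
theorem statement_15 :
    (permSpan 4 {X 2 * X 3 ^ 3} =
        Submodule.span kk
          (Qmk 4 '' {f | ∃ i j : Fin 4, i ≠ j ∧ f = X i * X j ^ 3}) ∧
      permSpan 4 {X 2 * X 3 ^ 3} ⊓ QInv 4 permSet =
        Submodule.span kk
          {Qmk 4 (∑ i : Fin 4, ∑ j : Fin 4, if i ≠ j then X i * X j ^ 3 else 0)} ∧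
      Qmk 4 (∑ i : Fin 4, ∑ j : Fin 4, if i ≠ j then X i * X j ^ 3 else 0) ≠ 0) ∧
    (permSpan 4 {X 1 * X 2 * X 3 ^ 2} =
        Submodule.span kk
          (Qmk 4 ''
            {f | ∃ i j l : Fin 4, i < j ∧ i < l ∧ j ≠ l ∧ f = X i * X j * X l ^ 2}) ∧
      permSpan 4 {X 1 * X 2 * X 3 ^ 2} ⊓ QInv 4 permSet = ⊥) := by
  rw [sum_sum_ite_ne_eq_sum_offDiag]
  exact ⟨⟨permSpan_eq_span_pairMonomials, permSpan_inf_QInv_eq_span_pairSum, Qmk_pairSum_ne_zero⟩,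
    permSpan_eq_span_tripleMonomials, permSpan_inf_QInv_eq_bot⟩

end
end

section
/- Let θ be the linear functional on (P_4)_9 whose value is 1 on each of the four monomials x_1x_2^3x_3^3x_4^2, x_1x_2^3x_3^4x_4, x_1x_2^5x_3^2x_4, x_1x_2^6x_3x_4, and 0 on every other monomial of degree 9. Then θ vanishes on every hit polynomial of degree 9; equivalently, θ(Sq^t(g)) = 0 for every t > 0 and every g in (P_4)_{9−t}. -/
open MvPolynomial

noncomputable section

/-- The exponent vector `(a, b, c, d)` of the monomial `x₁^a x₂^b x₃^c x₄^d`. -/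
def ev (a b c d : ℕ) : Fin 4 →₀ ℕ := Finsupp.equivFunOnFinite.symm ![a, b, c, d]

/-!
The functional `θ` is fixed by the total Steenrod square: `θ ∘ Sq = θ`. As `θ` only sees degree
`9`, it takes the same value on `(Sq g)₉` as on `Sq g`, hence as on `g`, and that value is `0` when
`g` is homogeneous of degree other than `9`.

To see that `θ ∘ Sq = θ`, write `γ_m` for the functional on `𝔽₂[x]` reading off the coefficient of
`x^m`. As `Sq` is multiplicative, precomposition with `Sq` acts on
`θ = γ₁ ⊗ (γ₃ ⊗ γ₃ ⊗ γ₂ + γ₃ ⊗ γ₄ ⊗ γ₁ + γ₅ ⊗ γ₂ ⊗ γ₁ + γ₆ ⊗ γ₁ ⊗ γ₁)` factor by factor, by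
`γ_m ↦ ∑_{j ≤ m} (j choose (m - j)) γ_j`. The terms of degree below `9` that this creates cancel in
pairs.
-/

section CoeffProd

variable {σ R : Type*} [CommSemiring R]

theorem toMvPolynomial_eq_sum_monomial (i : σ) (p : Polynomial R) :
    p.toMvPolynomial i = ∑ k ∈ p.support, monomial (Finsupp.single i k) (p.coeff k) := by
  conv_lhs => rw [p.as_sum_support_C_mul_X_pow]
  simp only [map_sum, map_mul, map_pow, Polynomial.toMvPolynomial_C, Polynomial.toMvPolynomial_X,
    X_pow_eq_monomial, C_mul_monomial, mul_one]

variable [Fintype σ]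

theorem coeff_prod_toMvPolynomial (p : σ → Polynomial R) (e : σ →₀ ℕ) :
    coeff e (∏ i, (p i).toMvPolynomial i) = ∏ i, (p i).coeff (e i) := by
  classical
  have expand : ∏ i, (p i).toMvPolynomial i =
      ∑ k ∈ Fintype.piFinset fun i => (p i).support,
        monomial (Finsupp.equivFunOnFinite.symm k) (∏ i, (p i).coeff (k i)) := by
    simp only [toMvPolynomial_eq_sum_monomial, Finset.prod_univ_sum, ← monomial_sum_prod]
    refine Finset.sum_congr rfl fun k _ => ?_
    rw [← Finsupp.univ_sum_single (Finsupp.equivFunOnFinite.symm k)]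
    rfl
  simp only [expand, coeff_sum, coeff_monomial, Equiv.symm_apply_eq]
  refine (Finset.sum_ite_eq' _ _ _).trans (ite_eq_left_iff.2 ?_)
  intro he
  obtain ⟨i, hi⟩ : ∃ i, (p i).coeff (e i) = 0 := by simpa [Fintype.mem_piFinset] using he
  exact (Finset.prod_eq_zero (Finset.mem_univ i) hi).symm

theorem coeff_monomial_one_eq_prod_single (e s : σ →₀ ℕ) :
    coeff e (monomial s (1 : R)) = ∏ i, Pi.single (M := fun _ => R) (e i) 1 (s i) := by
  classical
  simp only [coeff_monomial, Pi.single_apply, Finset.prod_ite_zero, Finset.prod_const_one,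
    Finset.mem_univ, true_imp_iff, DFunLike.ext_iff]

end CoeffProd

/-- The image of `γ_m`, the functional on `𝔽₂[x]` reading off the coefficient of `x^m`, under
precomposition with `Sq`. Functionals on `𝔽₂[x]` are encoded by their values on the powers of `x`,
so that `γ_m` itself is `Pi.single m 1`. -/
def dualSq (m n : ℕ) : kk := ((Polynomial.X + Polynomial.X ^ 2 : Polynomial kk) ^ n).coeff m

theorem dualSq_apply (m n : ℕ) :
    dualSq m n = if n ≤ m then (n.choose (m - n) : kk) else 0 := by
  have factor : (Polynomial.X + Polynomial.X ^ 2 : Polynomial kk) =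
      Polynomial.X * (Polynomial.X + 1) := by ring
  rw [dualSq, factor, mul_pow, Polynomial.coeff_X_pow_mul', Polynomial.coeff_X_add_one_pow]

theorem dualSq_eq_sum (m : ℕ) :
    dualSq m = ∑ j ∈ Finset.range (m + 1), Pi.single j (j.choose (m - j) : kk) := by
  ext n
  simp only [dualSq_apply, Finset.sum_apply, Pi.single_apply, Finset.sum_ite_eq,
    Finset.mem_range, Nat.lt_succ_iff]

theorem dualSq_one : dualSq 1 = Pi.single 1 1 := by
  simp [dualSq_eq_sum, Finset.sum_range_succ]

theorem dualSq_two : dualSq 2 = Pi.single 2 1 + Pi.single 1 1 := by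
  simp [dualSq_eq_sum, Finset.sum_range_succ, add_comm]

theorem dualSq_three : dualSq 3 = Pi.single 3 1 := by
  simp [dualSq_eq_sum, Finset.sum_range_succ, CharTwo.ofNat_eq_mod]

theorem dualSq_four : dualSq 4 = Pi.single 4 1 + Pi.single 3 1 + Pi.single 2 1 := by
  simp [dualSq_eq_sum, Finset.sum_range_succ, Nat.choose, CharTwo.ofNat_eq_mod,
    add_comm, add_left_comm]

theorem dualSq_five : dualSq 5 = Pi.single 5 1 + Pi.single 3 1 := by
  simp [dualSq_eq_sum, Finset.sum_range_succ, Nat.choose, CharTwo.ofNat_eq_mod, add_comm]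

theorem dualSq_six : dualSq 6 = Pi.single 6 1 + Pi.single 5 1 + Pi.single 3 1 := by
  simp [dualSq_eq_sum, Finset.sum_range_succ, Nat.choose, CharTwo.ofNat_eq_mod,
    add_comm, add_left_comm]

theorem coeff_sqTotal_monomial (e s : Fin 4 →₀ ℕ) :
    coeff e (sqTotal (monomial s 1)) = ∏ i, dualSq (e i) (s i) := by
  have factor : sqTotal (monomial s 1) =
      ∏ i, ((Polynomial.X + Polynomial.X ^ 2) ^ s i).toMvPolynomial i := by
    rw [sqTotal, aeval_monomial, map_one, one_mul, Finsupp.prod_fintype _ _ fun _ => pow_zero _]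
    simp only [map_pow, map_add, Polynomial.toMvPolynomial_X]
  rw [factor, coeff_prod_toMvPolynomial]
  rfl

theorem map_eq_zero_of_mem_hitSub {M : Type*} [AddCommMonoid M] [Module kk M] {n : ℕ}
    {L : P4 →ₗ[kk] M} (hdeg : ∀ f, L (homogeneousComponent n f) = L f)
    (hsq : ∀ f, L (sqTotal f) = L f) {f : P4} (hf : f ∈ hitSub n) : L f = 0 := by
  suffices hitSub n ≤ LinearMap.ker L from this hf
  refine Submodule.span_le.2 ?_
  rintro _ ⟨d, hdn, g, hg, rfl⟩
  calc L (homogeneousComponent n (sqTotal g)) = L (sqTotal g) := hdeg _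
    _ = L g := hsq g
    _ = L (homogeneousComponent n g) := (hdeg g).symm
    _ = 0 := by rw [homogeneousComponent_of_mem hg, if_neg hdn.ne', map_zero]

/-- The functional `θ` of the theorem, on all of `P4`: it vanishes on monomials of degree other
than `9`. -/
def theta : P4 →ₗ[kk] kk :=
  lcoeff kk (ev 1 3 3 2) + lcoeff kk (ev 1 3 4 1) + lcoeff kk (ev 1 5 2 1) + lcoeff kk (ev 1 6 1 1)

theorem theta_apply (f : P4) :
    theta f = coeff (ev 1 3 3 2) f + coeff (ev 1 3 4 1) f + coeff (ev 1 5 2 1) f +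
      coeff (ev 1 6 1 1) f :=
  rfl

theorem degree_ev (a b c d : ℕ) : (ev a b c d).degree = a + b + c + d := by
  simp [Finsupp.degree_eq_sum, ev, Fin.sum_univ_four]

theorem theta_homogeneousComponent (f : P4) : theta (homogeneousComponent 9 f) = theta f := by
  simp [theta_apply, coeff_homogeneousComponent, degree_ev]

theorem coeff_ev_monomial (a b c d : ℕ) (s : Fin 4 →₀ ℕ) :
    coeff (ev a b c d) (monomial s (1 : kk)) =
      Pi.single (M := fun _ => kk) a 1 (s 0) * Pi.single (M := fun _ => kk) b 1 (s 1) *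
        Pi.single (M := fun _ => kk) c 1 (s 2) * Pi.single (M := fun _ => kk) d 1 (s 3) := by
  rw [coeff_monomial_one_eq_prod_single, Fin.prod_univ_four]
  rfl

theorem coeff_ev_sqTotal_monomial (a b c d : ℕ) (s : Fin 4 →₀ ℕ) :
    coeff (ev a b c d) (sqTotal (monomial s 1)) =
      dualSq a (s 0) * dualSq b (s 1) * dualSq c (s 2) * dualSq d (s 3) := by
  rw [coeff_sqTotal_monomial, Fin.prod_univ_four]
  rfl

theorem theta_sqTotal_monomial (s : Fin 4 →₀ ℕ) :
    theta (sqTotal (monomial s 1)) = theta (monomial s 1) := by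
  let γ (j : ℕ) (i : Fin 4) : kk := Pi.single (M := fun _ => kk) j 1 (s i)
  simp only [theta_apply, coeff_ev_sqTotal_monomial, coeff_ev_monomial, dualSq_one, dualSq_two,
    dualSq_three, dualSq_four, dualSq_five, dualSq_six, Pi.add_apply]
  linear_combination γ 1 0 * (γ 3 1 * γ 3 2 * γ 1 3 + γ 3 1 * γ 2 2 * γ 1 3 +
    γ 5 1 * γ 1 2 * γ 1 3 + γ 3 1 * γ 1 2 * γ 1 3) * CharTwo.two_eq_zero (R := kk)

theorem theta_sqTotal (f : P4) : theta (sqTotal f) = theta f := by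
  suffices theta ∘ₗ sqTotal.toLinearMap = theta from LinearMap.congr_fun this f
  ext s
  exact theta_sqTotal_monomial s

/-- The linear functional on `(P_4)_9` taking the value `1` exactly on the monomials
`x₁x₂³x₃³x₄²`, `x₁x₂³x₃⁴x₄`, `x₁x₂⁵x₃²x₄`, `x₁x₂⁶x₃x₄` vanishes on every hit polynomial
of degree `9`. -/
theorem statement_16 :
    ∀ f ∈ hitSub 9,
      coeff (ev 1 3 3 2) f + coeff (ev 1 3 4 1) f + coeff (ev 1 5 2 1) f +
        coeff (ev 1 6 1 1) f = 0 :=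
  fun _ hf => map_eq_zero_of_mem_hitSub theta_homogeneousComponent theta_sqTotal hf

end
end
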